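/- Let T be a tree on n vertices and let 1/2 ≤ α < 1. Then for every k with 1 ≤ k ≤ n, S_k(A_α(T)) ≤ α(n + 2k − 2). -/

import Mathlib

open Matrix Finset Real

/-- The `A_α`-matrix of a graph: `A_α(G) = α·D(G) + (1−α)·A(G)`. -/
noncomputable def Aalpha {n : ℕ} (α : ℝ) (G : SimpleGraph (Fin n)) [DecidableRel G.Adj] :
    Matrix (Fin n) (Fin n) ℝ :=
  α • Matrix.diagonal (fun i => (G.degree i : ℝ)) + (1 - α) • G.adjMatrix ℝ

/-- The sum of the `k` largest eigenvalues of a real symmetric matrix, expressed as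
the supremum over all `k`-subsets of indices of the corresponding eigenvalue sums. -/
noncomputable def Sk {n : ℕ} (M : Matrix (Fin n) (Fin n) ℝ) (k : ℕ) : ℝ :=
  if h : M.IsHermitian then
    sSup {x : ℝ | ∃ s : Finset (Fin n), s.card = k ∧ x = ∑ i ∈ s, h.eigenvalues i}
  else 0

/-!
For `1/2 ≤ α ≤ 1` the quadratic form `x ⬝ᵥ A_α x` splits into nonnegative vertex contributions
`E v x`, and Cauchy–Schwarz on the edges at `v` gives `(A_α x) v ^ 2 ≤ d v * E v x`. For a unit
eigenvector `u` with eigenvalue `μ > 0` this reads `μ * u v ^ 2 ≤ d v * p v`, where the weights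
`p v = E v u / μ` sum to `1`. Over any set `s` of eigenpairs, `t v = ∑ μ * u v ^ 2` is also at most
the diagonal entry `α * d v`, so mixing the two bounds as
`t v = (1 - 1 / d v) * t v + (1 / d v) * t v` gives `t v ≤ α * (d v - 1) + ∑ p v`. Summing over the
non-isolated vertices bounds the sum of the eigenvalues by `α * ∑ (d v - 1) + #s`; when `s`
outnumbers these vertices, as for the tree with one vertex, the trace of `A_α` is a better bound.
-/

section Spectral

variable {ι : Type*} [Fintype ι] [DecidableEq ι] {M : Matrix ι ι ℝ}

lemma sum_eigenvectorBasis_apply_sq (hM : M.IsHermitian) (i : ι) :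
    ∑ v, hM.eigenvectorBasis i v ^ 2 = 1 := by
  rw [← EuclideanSpace.real_norm_sq_eq, hM.eigenvectorBasis.norm_eq_one, one_pow]

lemma dotProduct_mulVec_eigenvectorBasis (hM : M.IsHermitian) (i : ι) :
    hM.eigenvectorBasis i ⬝ᵥ (M *ᵥ hM.eigenvectorBasis i) = hM.eigenvalues i := by
  simpa using (hM.eigenvalues_eq i).symm

lemma sum_eigenvalues_mul_eigenvectorBasis_apply_sq (hM : M.IsHermitian) (v : ι) :
    ∑ i, hM.eigenvalues i * hM.eigenvectorBasis i v ^ 2 = M v v := by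
  conv_rhs => rw [hM.spectral_theorem, Unitary.conjStarAlgAut_apply, mul_apply]
  refine sum_congr rfl fun i _ => ?_
  simp only [mul_diagonal, Function.comp_apply, RCLike.ofReal_real_eq_id, id_eq, star_apply,
    hM.eigenvectorUnitary_apply, star_trivial]
  ring

lemma sum_eigenvalues_mul_eigenvectorBasis_apply_sq_le (hM : M.PosSemidef) (s : Finset ι) (v : ι) :
    ∑ i ∈ s, hM.isHermitian.eigenvalues i * hM.isHermitian.eigenvectorBasis i v ^ 2 ≤ M v v :=
  (sum_le_univ_sum_of_nonneg fun i => mul_nonneg (hM.eigenvalues_nonneg i) (sq_nonneg _)).trans_eq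
    (sum_eigenvalues_mul_eigenvectorBasis_apply_sq hM.isHermitian v)

lemma sum_eigenvalues_le_trace (hM : M.PosSemidef) (s : Finset ι) :
    ∑ i ∈ s, hM.isHermitian.eigenvalues i ≤ M.trace :=
  (sum_le_univ_sum_of_nonneg hM.eigenvalues_nonneg).trans_eq
    hM.isHermitian.trace_eq_sum_eigenvalues.symm

lemma Sk_le {n k : ℕ} {M : Matrix (Fin n) (Fin n) ℝ} (hM : M.IsHermitian) (hk : k ≤ n) {b : ℝ}
    (hb : ∀ s : Finset (Fin n), #s = k → ∑ i ∈ s, hM.eigenvalues i ≤ b) : Sk M k ≤ b := by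
  obtain ⟨s, -, hs⟩ := exists_subset_card_eq (s := (univ : Finset (Fin n))) (by simpa using hk)
  rw [Sk, dif_pos hM]
  refine csSup_le ⟨_, s, hs, rfl⟩ ?_
  rintro _ ⟨t, ht, rfl⟩
  exact hb t ht

end Spectral

section Inequalities

variable {α : ℝ}

-- Jensen's inequality for the square at `a / 2` and `b` with weights `2 * (1 - α)` and `2 * α - 1`.
lemma sq_one_sub_mul_add_le (hα₀ : 1 / 2 ≤ α) (hα₁ : α ≤ 1) (a b : ℝ) :
    ((1 - α) * a + (2 * α - 1) * b) ^ 2 ≤ (1 - α) / 2 * a ^ 2 + (2 * α - 1) * b ^ 2 := by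
  have hjensen : 0 ≤ (1 - α) * (2 * α - 1) * (a - 2 * b) ^ 2 :=
    mul_nonneg (mul_nonneg (by linarith) (by linarith)) (sq_nonneg _)
  linarith

lemma le_mul_sub_one_add {t d p : ℝ} (hd : 1 ≤ d) (h₁ : t ≤ α * d) (h₂ : t ≤ d * p) :
    t ≤ α * (d - 1) + p := by
  have hmix : (d - 1) * t + t ≤ (d - 1) * (α * d) + d * p :=
    add_le_add (mul_le_mul_of_nonneg_left h₁ (by linarith)) h₂
  refine le_of_mul_le_mul_left ?_ (by linarith : 0 < d)
  linarith

end Inequalities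

section LocalEnergy

variable {V : Type*} [Fintype V] (G : SimpleGraph V) [DecidableRel G.Adj] {α : ℝ}

/-- The contribution of the edges at `v` to the quadratic form of `A_α(G)` at `x`. In
`x ⬝ᵥ A_α(G) x = ∑_{vw ∈ E} ((1 - α)(x v + x w)² + (2α - 1)(x v² + x w²))` the first term of each
edge is shared equally between its ends. -/
noncomputable def localEnergy (α : ℝ) (x : V → ℝ) (v : V) : ℝ :=
  ∑ w ∈ G.neighborFinset v, ((1 - α) / 2 * (x v + x w) ^ 2 + (2 * α - 1) * x v ^ 2)

lemma localEnergy_nonneg (hα₀ : 1 / 2 ≤ α) (hα₁ : α ≤ 1) (x : V → ℝ) (v : V) :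
    0 ≤ localEnergy G α x v := by
  have hcoeff : 0 ≤ (1 - α) / 2 ∧ 0 ≤ 2 * α - 1 := ⟨by linarith, by linarith⟩
  exact sum_nonneg fun w _ =>
    add_nonneg (mul_nonneg hcoeff.1 (sq_nonneg _)) (mul_nonneg hcoeff.2 (sq_nonneg _))

lemma sum_sum_neighborFinset_swap {R : Type*} [AddCommMonoid R] (f : V → V → R) :
    ∑ v, ∑ w ∈ G.neighborFinset v, f v w = ∑ v, ∑ w ∈ G.neighborFinset v, f w v :=
  sum_comm' fun v w => by simp [G.adj_comm]

end LocalEnergy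

section Aalpha

variable {n : ℕ} (G : SimpleGraph (Fin n)) [DecidableRel G.Adj] {α : ℝ}

lemma isHermitian_Aalpha (α : ℝ) : (Aalpha α G).IsHermitian := by
  rw [IsHermitian, conjTranspose_eq_transpose_of_trivial]
  simp [Aalpha]

lemma Aalpha_apply_self (α : ℝ) (v : Fin n) : Aalpha α G v v = α * G.degree v := by
  simp [Aalpha]

lemma trace_Aalpha (α : ℝ) : (Aalpha α G).trace = α * (2 * #G.edgeFinset) := by
  have hdeg : ∑ v, (G.degree v : ℝ) = 2 * #G.edgeFinset := by
    exact_mod_cast G.sum_degrees_eq_twice_card_edges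
  simp only [trace, diag_apply, Aalpha_apply_self, ← mul_sum, hdeg]

lemma Aalpha_mulVec_apply (α : ℝ) (x : Fin n → ℝ) (v : Fin n) :
    (Aalpha α G *ᵥ x) v =
      ∑ w ∈ G.neighborFinset v, ((1 - α) * (x v + x w) + (2 * α - 1) * x v) := by
  simp only [Aalpha, add_mulVec, smul_mulVec, Pi.add_apply, Pi.smul_apply, mulVec_diagonal,
    SimpleGraph.adjMatrix_mulVec_apply, smul_eq_mul, sum_add_distrib, ← mul_sum, sum_const,
    SimpleGraph.card_neighborFinset_eq_degree, nsmul_eq_mul]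
  ring

lemma sum_localEnergy (α : ℝ) (x : Fin n → ℝ) :
    ∑ v, localEnergy G α x v = x ⬝ᵥ (Aalpha α G *ᵥ x) := by
  have hswap : ∑ v, ∑ w ∈ G.neighborFinset v, (x w ^ 2 - x v ^ 2) = 0 := by
    simp only [sum_sub_distrib]
    rw [sub_eq_zero, sum_sum_neighborFinset_swap G fun _ w => x w ^ 2]
  have hlocal (v : Fin n) : localEnergy G α x v = x v * (Aalpha α G *ᵥ x) v +
      (1 - α) / 2 * ∑ w ∈ G.neighborFinset v, (x w ^ 2 - x v ^ 2) := by
    rw [localEnergy, Aalpha_mulVec_apply, mul_sum, mul_sum, ← sum_add_distrib]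
    exact sum_congr rfl fun w _ => by ring
  simp only [hlocal, sum_add_distrib, ← mul_sum, hswap, mul_zero, add_zero, dotProduct]

lemma posSemidef_Aalpha (hα₀ : 1 / 2 ≤ α) (hα₁ : α ≤ 1) : (Aalpha α G).PosSemidef := by
  refine .of_dotProduct_mulVec_nonneg (isHermitian_Aalpha G α) fun x => ?_
  rw [star_trivial, ← sum_localEnergy]
  exact sum_nonneg fun v _ => localEnergy_nonneg G hα₀ hα₁ x v

lemma sq_Aalpha_mulVec_apply_le (hα₀ : 1 / 2 ≤ α) (hα₁ : α ≤ 1) (x : Fin n → ℝ) (v : Fin n) :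
    (Aalpha α G *ᵥ x) v ^ 2 ≤ G.degree v * localEnergy G α x v := by
  rw [Aalpha_mulVec_apply, ← G.card_neighborFinset_eq_degree, localEnergy]
  refine sq_sum_le_card_mul_sum_sq.trans ?_
  gcongr with w
  exact sq_one_sub_mul_add_le hα₀ hα₁ (x v + x w) (x v)

/-- The share of `v` in the quadratic form of `A_α(G)` at its `i`-th unit eigenvector: for
`1/2 ≤ α ≤ 1`, nonnegative weights on the vertices with sum `1`, which distribute the term `#s` of
the eigenvalue bound over the vertices. By the convention `x / 0 = 0` they all vanish if the
eigenvalue does. -/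
noncomputable def normalizedEnergy (α : ℝ) (i v : Fin n) : ℝ :=
  localEnergy G α ((isHermitian_Aalpha G α).eigenvectorBasis i) v /
    (isHermitian_Aalpha G α).eigenvalues i

lemma eigenvalue_Aalpha_mul_sq_le (hα₀ : 1 / 2 ≤ α) (hα₁ : α ≤ 1) (i v : Fin n) :
    (isHermitian_Aalpha G α).eigenvalues i * (isHermitian_Aalpha G α).eigenvectorBasis i v ^ 2 ≤
      G.degree v * normalizedEnergy G α i v := by
  set μ := (isHermitian_Aalpha G α).eigenvalues i with hμ
  set u := (isHermitian_Aalpha G α).eigenvectorBasis i with hu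
  have hμ_nonneg : 0 ≤ μ := (posSemidef_Aalpha G hα₀ hα₁).eigenvalues_nonneg i
  have heigen : (Aalpha α G *ᵥ u) v = μ * u v := by
    rw [hu, (isHermitian_Aalpha G α).mulVec_eigenvectorBasis, Pi.smul_apply, smul_eq_mul]
  have hsq := sq_Aalpha_mulVec_apply_le G hα₀ hα₁ u v
  rw [heigen] at hsq
  rw [normalizedEnergy, ← hμ, ← hu]
  rcases hμ_nonneg.eq_or_lt with hzero | hpos
  · simp [← hzero]
  · rw [← mul_div_assoc, le_div_iff₀ hpos]
    linarith

lemma normalizedEnergy_nonneg (hα₀ : 1 / 2 ≤ α) (hα₁ : α ≤ 1) (i v : Fin n) :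
    0 ≤ normalizedEnergy G α i v :=
  div_nonneg (localEnergy_nonneg G hα₀ hα₁ _ v) ((posSemidef_Aalpha G hα₀ hα₁).eigenvalues_nonneg i)

lemma sum_normalizedEnergy_le_one (α : ℝ) (i : Fin n) : ∑ v, normalizedEnergy G α i v ≤ 1 := by
  simp only [normalizedEnergy]
  rw [← sum_div, sum_localEnergy, dotProduct_mulVec_eigenvectorBasis]
  exact div_self_le_one _

lemma sum_eigenvalues_Aalpha_mul_sq_le_of_mem_support (hα₀ : 1 / 2 ≤ α) (hα₁ : α ≤ 1)
    (s : Finset (Fin n)) {v : Fin n} (hv : v ∈ G.support) :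
    ∑ i ∈ s, (isHermitian_Aalpha G α).eigenvalues i *
        (isHermitian_Aalpha G α).eigenvectorBasis i v ^ 2 ≤
      α * (G.degree v - 1) + ∑ i ∈ s, normalizedEnergy G α i v := by
  have hdeg : (1 : ℝ) ≤ G.degree v := by exact_mod_cast (G.degree_pos_iff_mem_support v).2 hv
  refine le_mul_sub_one_add hdeg ?_ ?_
  · rw [← Aalpha_apply_self]
    exact sum_eigenvalues_mul_eigenvectorBasis_apply_sq_le (posSemidef_Aalpha G hα₀ hα₁) s v
  · rw [mul_sum]
    exact sum_le_sum fun i _ => eigenvalue_Aalpha_mul_sq_le G hα₀ hα₁ i v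

lemma sum_eigenvalues_Aalpha_le_add_card (hα₀ : 1 / 2 ≤ α) (hα₁ : α ≤ 1) (s : Finset (Fin n)) :
    ∑ i ∈ s, (isHermitian_Aalpha G α).eigenvalues i ≤
      α * (2 * #G.edgeFinset - #G.support.toFinset) + #s := by
  set μ := (isHermitian_Aalpha G α).eigenvalues
  set u := (isHermitian_Aalpha G α).eigenvectorBasis
  have hisolated (v : Fin n) (hv : v ∉ G.support.toFinset) : ∑ i ∈ s, μ i * u i v ^ 2 ≤ 0 := by
    have hdeg : G.degree v = 0 := by
      rwa [G.degree_eq_zero_iff_notMem_support, ← Set.mem_toFinset]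
    refine sum_nonpos fun i _ => ?_
    simpa [hdeg] using eigenvalue_Aalpha_mul_sq_le G hα₀ hα₁ i v
  have hdegrees : ∑ v ∈ G.support.toFinset, (G.degree v : ℝ) = 2 * #G.edgeFinset := by
    exact_mod_cast G.sum_degrees_support_eq_twice_card_edges
  have hweights : ∑ v ∈ G.support.toFinset, ∑ i ∈ s, normalizedEnergy G α i v ≤ #s := by
    rw [sum_comm, ← nsmul_one, ← sum_const]
    exact sum_le_sum fun i _ => (sum_le_univ_sum_of_nonneg
      (normalizedEnergy_nonneg G hα₀ hα₁ i)).trans (sum_normalizedEnergy_le_one G α i)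
  calc ∑ i ∈ s, μ i
      = ∑ v, ∑ i ∈ s, μ i * u i v ^ 2 := by
        rw [sum_comm]
        simp only [← mul_sum, u, sum_eigenvectorBasis_apply_sq, mul_one]
    _ ≤ ∑ v ∈ G.support.toFinset, ∑ i ∈ s, μ i * u i v ^ 2 := by
        rw [← sum_add_sum_compl G.support.toFinset]
        exact add_le_of_nonpos_right (sum_nonpos fun v hv => hisolated v (mem_compl.1 hv))
    _ ≤ ∑ v ∈ G.support.toFinset,
          (α * (G.degree v - 1) + ∑ i ∈ s, normalizedEnergy G α i v) :=
        sum_le_sum fun v hv => sum_eigenvalues_Aalpha_mul_sq_le_of_mem_support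
          G hα₀ hα₁ s (Set.mem_toFinset.1 hv)
    _ = α * (2 * #G.edgeFinset - #G.support.toFinset) +
          ∑ v ∈ G.support.toFinset, ∑ i ∈ s, normalizedEnergy G α i v := by
        rw [sum_add_distrib, ← mul_sum, sum_sub_distrib, hdegrees, sum_const, nsmul_one]
    _ ≤ α * (2 * #G.edgeFinset - #G.support.toFinset) + #s := by gcongr

end Aalpha

lemma card_edgeFinset_support_bound_of_isTree {n : ℕ} {T : SimpleGraph (Fin n)}
    [DecidableRel T.Adj] (hT : T.IsTree) {α : ℝ} (hα₀ : 1 / 2 ≤ α) {k : ℕ} (hk : 1 ≤ k) :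
    α * (2 * #T.edgeFinset - #T.support.toFinset) + min k #T.support.toFinset ≤
      α * (n + 2 * k - 2) := by
  have hedges : #T.edgeFinset + 1 = n := hT.card_edgeFinset.trans (Fintype.card_fin n)
  have hk' : (1 : ℝ) ≤ k := by exact_mod_cast hk
  rcases subsingleton_or_nontrivial (Fin n) with hsub | _
  · have hn : n = 1 := by have := Fin.subsingleton_iff_le_one.1 hsub; lia
    have hnoedge : #T.edgeFinset = 0 := by lia
    have hsupp : #T.support.toFinset = 0 := by simp
    rw [hnoedge, hsupp, hn, Nat.min_zero]
    have hpos : 0 ≤ α * (2 * k - 1) := mul_nonneg (by linarith) (by linarith)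
    push_cast
    linarith
  · have hsupp : #T.support.toFinset = n := by
      simp [hT.connected.preconnected.support_eq_univ]
    have hmin : ((min k n : ℕ) : ℝ) ≤ k := by exact_mod_cast min_le_left k n
    have hkα : (k : ℝ) ≤ 2 * α * k := le_mul_of_one_le_left (by positivity) (by linarith)
    have hedges' : (#T.edgeFinset : ℝ) = n - 1 := eq_sub_of_add_eq (by exact_mod_cast hedges)
    rw [hsupp, hedges']
    linarith

theorem stmt8_general {n : ℕ} (G : SimpleGraph (Fin n)) [DecidableRel G.Adj]
    (α : ℝ) (hα₀ : 1 / 2 ≤ α) (hα₁ : α ≤ 1) (k : ℕ) (hk : k ≤ n) :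
    Sk (Aalpha α G) k ≤
      α * (2 * #G.edgeFinset - #G.support.toFinset) + min k #G.support.toFinset := by
  refine Sk_le (isHermitian_Aalpha G α) hk fun s hs => ?_
  rw [Nat.cast_min, ← min_add_add_left]
  refine le_min ?_ ?_
  · exact hs ▸ sum_eigenvalues_Aalpha_le_add_card G hα₀ hα₁ s
  · have htrace := sum_eigenvalues_le_trace (posSemidef_Aalpha G hα₀ hα₁) s
    have hsupp : α * #G.support.toFinset ≤ #G.support.toFinset :=
      mul_le_of_le_one_left (Nat.cast_nonneg _) hα₁
    rw [trace_Aalpha] at htrace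
    linarith

theorem stmt8 {n : ℕ} (T : SimpleGraph (Fin n)) [DecidableRel T.Adj] (hT : T.IsTree)
    (α : ℝ) (hα0 : 1 / 2 ≤ α) (hα1 : α < 1)
    (k : ℕ) (hk1 : 1 ≤ k) (hkn : k ≤ n) :
    Sk (Aalpha α T) k ≤ α * ((n : ℝ) + 2 * k - 2) :=
  (stmt8_general T α hα0 hα1.le k hkn).trans (card_edgeFinset_support_bound_of_isTree hT hα0 hk1)
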